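/- Let Y be a geodesic metric space and let E : Y → ℝ ∪ {+∞} be λ-convex, λ ∈ ℝ, and lower semicontinuous, with D(E) nonempty. Then the extended descending slope y ↦ |∂⁻E|(y) (equal to +∞ outside D(E)) is a lower semicontinuous function from Y to [0, +∞]. -/

import Mathlib

open Filter MeasureTheory Set Bornology
open scoped ENNReal Topology NNReal

/-- A (constant-speed, minimizing) geodesic defined on `[0,1]`:
`d(γ_s, γ_t) = |s - t| * d(γ_0, γ_1)` for all `s, t ∈ [0,1]`. -/
def IsGeodesic {Y : Type*} [MetricSpace Y] (γ : ℝ → Y) : Prop :=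
  ∀ s ∈ Set.Icc (0:ℝ) 1, ∀ t ∈ Set.Icc (0:ℝ) 1,
    dist (γ s) (γ t) = |s - t| * dist (γ 0) (γ 1)

/-- A metric space is geodesic if every two points are joined by a geodesic. -/
def GeodesicSpace (Y : Type*) [MetricSpace Y] : Prop :=
  ∀ x y : Y, ∃ γ : ℝ → Y, IsGeodesic γ ∧ γ 0 = x ∧ γ 1 = y

/-- The CAT(0) condition: geodesic space satisfying the comparison inequality
`d²(γ_t, a) ≤ (1-t)·d²(γ_0, a) + t·d²(γ_1, a) − t(1-t)·d²(γ_0, γ_1)`.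
(Completeness is required separately as a typeclass assumption.) -/
def Cat0 (Y : Type*) [MetricSpace Y] : Prop :=
  GeodesicSpace Y ∧
    ∀ γ : ℝ → Y, IsGeodesic γ → ∀ a : Y, ∀ t ∈ Set.Icc (0:ℝ) 1,
      dist (γ t) a ^ 2 ≤ (1 - t) * dist (γ 0) a ^ 2 + t * dist (γ 1) a ^ 2
        - t * (1 - t) * dist (γ 0) (γ 1) ^ 2

/-- A subset is geodesically convex if every geodesic joining two of its points
lies entirely inside it. -/
def GeodesicConvex {Y : Type*} [MetricSpace Y] (C : Set Y) : Prop :=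
  ∀ γ : ℝ → Y, IsGeodesic γ → γ 0 ∈ C → γ 1 ∈ C → ∀ t ∈ Set.Icc (0:ℝ) 1, γ t ∈ C

/-- `lam`-convexity along geodesics of an extended-real-valued functional:
`E(γ_t) ≤ (1-t)E(γ_0) + tE(γ_1) − (lam/2)t(1−t)d²(γ_0,γ_1)`. -/
def LamConvex {Y : Type*} [MetricSpace Y] (lam : ℝ) (E : Y → EReal) : Prop :=
  ∀ γ : ℝ → Y, IsGeodesic γ → ∀ t ∈ Set.Icc (0:ℝ) 1,
    E (γ t) ≤ ((1 - t : ℝ) : EReal) * E (γ 0) + ((t : ℝ) : EReal) * E (γ 1)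
      - ((lam / 2 * t * (1 - t) * dist (γ 0) (γ 1) ^ 2 : ℝ) : EReal)

/-- The descending slope `|∂⁻E|(y) = limsup_{z→y} (E(y)−E(z))⁺ / d(y,z)`,
set to `∞` outside the domain `{E < ∞}` of `E`. -/
noncomputable def descendingSlope {Y : Type*} [MetricSpace Y] (E : Y → EReal) (y : Y) :
    ℝ≥0∞ :=
  if E y = ⊤ then ⊤
  else Filter.limsup (fun z => ENNReal.ofReal ((E y - E z).toReal / dist y z))
      (nhdsWithin y {y}ᶜ)

/-- `ω(y; (y_n)) := limsup_n d(y, y_n)²`. -/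
noncomputable def asymptoticRadius {Y : Type*} [MetricSpace Y] (yn : ℕ → Y) (y : Y) : ℝ :=
  Filter.limsup (fun n => dist y (yn n) ^ 2) Filter.atTop

/-- Weak convergence of a bounded sequence: `y` is an asymptotic center
(i.e. a minimizer of `ω(·; ·)`) of every subsequence. -/
def WeakConv {Y : Type*} [MetricSpace Y] (yn : ℕ → Y) (y : Y) : Prop :=
  Bornology.IsBounded (Set.range yn) ∧
    ∀ φ : ℕ → ℕ, StrictMono φ →
      ∀ z : Y, asymptoticRadius (yn ∘ φ) y ≤ asymptoticRadius (yn ∘ φ) z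

/-- Absolute continuity on a set `I ⊆ ℝ`: there is a nonnegative integrable `g`
with `d(y_s, y_t) ≤ ∫_s^t g` for `s ≤ t` in `I`. -/
def AbsContOnSet {Y : Type*} [MetricSpace Y] (y : ℝ → Y) (I : Set ℝ) : Prop :=
  ∃ g : ℝ → ℝ, (∀ t, 0 ≤ g t) ∧ MeasureTheory.IntegrableOn g I ∧
    ∀ s ∈ I, ∀ t ∈ I, s ≤ t → dist (y s) (y t) ≤ ∫ r in s..t, g r

/-- Absolute continuity on the interval `[a,b]`. -/
def AbsContOn {Y : Type*} [MetricSpace Y] (y : ℝ → Y) (a b : ℝ) : Prop :=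
  AbsContOnSet y (Set.Icc a b)

/-- Local absolute continuity on `(0,∞)`. -/
def LocAbsCont {Y : Type*} [MetricSpace Y] (y : ℝ → Y) : Prop :=
  ∀ a b : ℝ, 0 < a → a ≤ b → AbsContOn y a b

/-- The Evolution Variational Inequality: for every `z`, for a.e. `t > 0` the
derivative of `t ↦ ½ d²(y_t, z)` exists and
`(d/dt)(½d²(y_t,z)) + E(y_t) + (lam/2)d²(y_t,z) ≤ E(z)`. -/
def EVI {Y : Type*} [MetricSpace Y] (lam : ℝ) (E : Y → EReal) (y : ℝ → Y) : Prop :=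
  ∀ z : Y, ∀ᵐ t ∂(MeasureTheory.volume.restrict (Set.Ioi (0:ℝ))),
    ∃ d' : ℝ, HasDerivAt (fun s => dist (y s) z ^ 2 / 2) d' t ∧
      (d' : EReal) + E (y t) + ((lam / 2 * dist (y t) z ^ 2 : ℝ) : EReal) ≤ E z

/-- A gradient flow trajectory for `E` starting from `y₀`: a locally absolutely
continuous curve on `(0,∞)` converging to `y₀` at `0` and satisfying the EVI. -/
def GradientFlow {Y : Type*} [MetricSpace Y] (lam : ℝ) (E : Y → EReal) (y₀ : Y)
    (y : ℝ → Y) : Prop :=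
  LocAbsCont y ∧ Filter.Tendsto y (nhdsWithin 0 (Set.Ioi 0)) (nhds y₀) ∧ EVI lam E y

/-- Along geodesics, `lam`-convexity bounds the descending slope from below by a global
difference quotient. -/
theorem ofReal_le_descendingSlope {Y : Type*} [MetricSpace Y] (hgeo : GeodesicSpace Y)
    {lam : ℝ} {E : Y → EReal} (hbot : ∀ y, E y ≠ ⊥) (hconv : LamConvex lam E)
    {y z : Y} (hyz : y ≠ z) {a b : ℝ} (ha : (a : EReal) ≤ E y) (hb : E z = b) :
    ENNReal.ofReal ((a - b) / dist y z + lam / 2 * dist y z) ≤ descendingSlope E y := by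
  unfold descendingSlope
  split_ifs with hy
  · exact le_top
  obtain ⟨γ, hγ, rfl, rfl⟩ := hgeo y z
  set d := dist (γ 0) (γ 1) with hd
  have hdpos : 0 < d := dist_pos.2 hyz
  obtain ⟨e, he⟩ : ∃ e : ℝ, E (γ 0) = e :=
    ⟨(E (γ 0)).toReal, (EReal.coe_toReal hy (hbot _)).symm⟩
  have hae : a ≤ e := by rw [he] at ha; exact_mod_cast ha
  have hdist : ∀ t ∈ Icc (0 : ℝ) 1, dist (γ 0) (γ t) = t * d := fun t ht => by
    rw [hγ 0 (by simp) t ht, zero_sub, abs_neg, abs_of_nonneg ht.1]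
  have hIoc : ∀ᶠ t : ℝ in 𝓝[>] 0, t ∈ Ioc (0 : ℝ) 1 := Ioc_mem_nhdsGT one_pos
  have hlim : Tendsto γ (𝓝[>] 0) (𝓝[≠] (γ 0)) := by
    refine tendsto_nhdsWithin_iff.2 ⟨?_, ?_⟩
    · rw [tendsto_iff_dist_tendsto_zero]
      have h0 : Tendsto (fun t : ℝ => t * d) (𝓝[>] 0) (𝓝 0) := by
        have : Tendsto (fun t : ℝ => t * d) (𝓝 0) (𝓝 (0 * d)) :=
          (continuous_id.mul continuous_const).tendsto 0
        rw [zero_mul] at this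
        exact this.mono_left nhdsWithin_le_nhds
      refine h0.congr' ?_
      filter_upwards [hIoc] with t ht
      rw [dist_comm, hdist t ⟨ht.1.le, ht.2⟩]
    · filter_upwards [hIoc] with t ht
      have : 0 < dist (γ 0) (γ t) := by
        rw [hdist t ⟨ht.1.le, ht.2⟩]
        exact mul_pos ht.1 hdpos
      exact (dist_pos.1 this).symm
  set u : Y → ℝ≥0∞ := fun w => ENNReal.ofReal ((E (γ 0) - E w).toReal / dist (γ 0) w)
  have hquot : ∀ᶠ t : ℝ in 𝓝[>] 0,
      ENNReal.ofReal ((a - b) / d + lam / 2 * (1 - t) * d) ≤ u (γ t) := by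
    filter_upwards [hIoc] with t ht
    have htc : t ∈ Icc (0 : ℝ) 1 := ⟨ht.1.le, ht.2⟩
    have hc := hconv γ hγ t htc
    rw [he, hb] at hc
    norm_cast at hc
    obtain ⟨f, hf⟩ : ∃ f : ℝ, E (γ t) = f :=
      ⟨(E (γ t)).toReal,
        (EReal.coe_toReal (ne_top_of_le_ne_top (EReal.coe_ne_top _) hc) (hbot _)).symm⟩
    rw [hf, EReal.coe_le_coe_iff, ← hd] at hc
    refine ENNReal.ofReal_le_ofReal ?_
    rw [he, hf, hdist t htc, ← EReal.coe_sub, EReal.toReal_coe,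
      le_div_iff₀ (mul_pos ht.1 hdpos)]
    have : ((a - b) / d + lam / 2 * (1 - t) * d) * (t * d)
        = t * (a - b) + lam / 2 * t * (1 - t) * d ^ 2 := by
      field_simp
    rw [this]
    nlinarith [mul_le_mul_of_nonneg_left hae ht.1.le]
  have htend : Tendsto (fun t : ℝ => ENNReal.ofReal ((a - b) / d + lam / 2 * (1 - t) * d))
      (𝓝[>] 0) (𝓝 (ENNReal.ofReal ((a - b) / d + lam / 2 * d))) := by
    refine ENNReal.tendsto_ofReal (Tendsto.mono_left ?_ nhdsWithin_le_nhds)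
    have : Continuous fun t : ℝ => (a - b) / d + lam / 2 * (1 - t) * d := by fun_prop
    simpa using this.tendsto 0
  calc ENNReal.ofReal ((a - b) / d + lam / 2 * d)
      = limsup (fun t : ℝ => ENNReal.ofReal ((a - b) / d + lam / 2 * (1 - t) * d)) (𝓝[>] 0) :=
        htend.limsup_eq.symm
    _ ≤ limsup (u ∘ γ) (𝓝[>] 0) := limsup_le_limsup hquot
    _ = limsup u (map γ (𝓝[>] 0)) := limsup_comp u γ _
    _ ≤ limsup u (𝓝[≠] (γ 0)) := limsup_le_limsup_of_le hlim

/-- A strict lower bound on the global difference quotient at `y` persists as a lower bound on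
the descending slope near `y`. -/
theorem eventually_lt_descendingSlope {Y : Type*} [MetricSpace Y] (hgeo : GeodesicSpace Y)
    {lam : ℝ} {E : Y → EReal} (hbot : ∀ y, E y ≠ ⊥) (hconv : LamConvex lam E)
    (hlsc : LowerSemicontinuous E) {y z : Y} (hyz : y ≠ z) {a b : ℝ}
    (ha : (a : EReal) < E y) (hb : E z = b) {c : ℝ≥0∞}
    (hc : c < ENNReal.ofReal ((a - b) / dist y z + lam / 2 * dist y z)) :
    ∀ᶠ x in 𝓝 y, c < descendingSlope E x := by
  have hcont : Tendsto (fun x => ENNReal.ofReal ((a - b) / dist x z + lam / 2 * dist x z)) (𝓝 y)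
      (𝓝 (ENNReal.ofReal ((a - b) / dist y z + lam / 2 * dist y z))) := by
    have hdist : Tendsto (fun x => dist x z) (𝓝 y) (𝓝 (dist y z)) :=
      (continuous_id.dist continuous_const).tendsto y
    exact ENNReal.tendsto_ofReal
      ((tendsto_const_nhds.div hdist (dist_ne_zero.2 hyz)).add (hdist.const_mul _))
  filter_upwards [hlsc y a ha, hcont.eventually (lt_mem_nhds hc), isOpen_ne.mem_nhds hyz]
    with x hax hcx hxz
  exact hcx.trans_le (ofReal_le_descendingSlope hgeo hbot hconv hxz hax.le hb)

/-- **Lower semicontinuity of the (extended) descending slope** of a `λ`-convex lower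
semicontinuous functional on a geodesic space. -/
theorem descendingSlope_lowerSemicontinuous {Y : Type*} [MetricSpace Y]
    (hgeo : GeodesicSpace Y) (lam : ℝ) (E : Y → EReal)
    (hbot : ∀ y, E y ≠ ⊥) (hconv : LamConvex lam E) (hlsc : LowerSemicontinuous E)
    (hdom : ∃ y, E y ≠ ⊤) :
    LowerSemicontinuous (descendingSlope E) := by
  intro y c hc
  by_cases hy : E y = ⊤
  · obtain ⟨z, hz⟩ := hdom
    have hyz : y ≠ z := fun h => hz (h ▸ hy)
    have hd : 0 < dist y z := dist_pos.2 hyz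
    have hctop : c ≠ ⊤ := hc.ne_top
    refine eventually_lt_descendingSlope hgeo hbot hconv hlsc hyz
      (a := (E z).toReal + dist y z * (c.toReal + 1 - lam / 2 * dist y z))
      (by rw [hy]; exact EReal.coe_lt_top _) (EReal.coe_toReal hz (hbot z)).symm ?_
    rw [add_sub_cancel_left, mul_div_cancel_left₀ _ hd.ne', sub_add_cancel,
      ENNReal.lt_ofReal_iff_toReal_lt hctop]
    exact lt_add_one _
  · obtain ⟨e, he⟩ : ∃ e : ℝ, E y = e := ⟨_, (EReal.coe_toReal hy (hbot y)).symm⟩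
    rw [descendingSlope, if_neg hy] at hc
    obtain ⟨c', hcc', hc'⟩ := exists_between hc
    have hctop : c ≠ ⊤ := hcc'.ne_top
    have hctop' : c' ≠ ⊤ := hc'.ne_top
    have hlt : c.toReal < c'.toReal := ENNReal.toReal_strict_mono hctop' hcc'
    have hnear : ∀ᶠ z in 𝓝[≠] y, c.toReal < c'.toReal + lam / 2 * dist y z := by
      have : Tendsto (fun z => c'.toReal + lam / 2 * dist y z) (𝓝 y) (𝓝 c'.toReal) := by
        have h : Continuous fun z => c'.toReal + lam / 2 * dist y z := by fun_prop
        simpa using h.tendsto y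
      exact (this.eventually (lt_mem_nhds hlt)).filter_mono nhdsWithin_le_nhds
    obtain ⟨z, hz, hzd, hzy⟩ :=
      ((frequently_lt_of_lt_limsup (by isBoundedDefault) hc').and_eventually
        (hnear.and self_mem_nhdsWithin)).exists
    have hyz : y ≠ z := fun h => hzy h.symm
    have hd : 0 < dist y z := dist_pos.2 hyz
    have hztop : E z ≠ ⊤ := fun h => by simp [h, he] at hz
    obtain ⟨b, hb⟩ : ∃ b : ℝ, E z = b := ⟨_, (EReal.coe_toReal hztop (hbot z)).symm⟩
    rw [he, hb, ← EReal.coe_sub, EReal.toReal_coe, ENNReal.lt_ofReal_iff_toReal_lt hctop'] at hz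
    have hgap : c.toReal < (e - b) / dist y z + lam / 2 * dist y z := by linarith
    have hopen : ∀ᶠ a in 𝓝[<] e, c.toReal < (a - b) / dist y z + lam / 2 * dist y z := by
      have h : Continuous fun a : ℝ => (a - b) / dist y z + lam / 2 * dist y z := by fun_prop
      exact ((h.tendsto e).eventually (lt_mem_nhds hgap)).filter_mono nhdsWithin_le_nhds
    obtain ⟨a, hac, hae⟩ := (hopen.and self_mem_nhdsWithin).exists
    refine eventually_lt_descendingSlope hgeo hbot hconv hlsc hyz (a := a)
      (by rw [he]; exact_mod_cast hae) hb ?_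
    rwa [ENNReal.lt_ofReal_iff_toReal_lt hctop]
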